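/- The identity xx^♯ = x^♯x = N(x)·1 holds for all x ∈ J(A,μ) if and only if μ ∈ F^×·1. (In particular, taking x = (0,1,0), the identity forces μ = ⅓T_A(μ)·1 ∈ F.) -/

import Mathlib

/-- A separable associative algebra of degree three over `F`:
an associative unital `F`-algebra `A` equipped with a cubic norm `NA`,
directional derivative `Ndir x y = N_A(x;y)` (the coefficient of `Z` in
`N_A(x+Zy)`), trace `TA`, quadratic form `SA`, adjoint `sharp` and bilinear
trace `Tbil`, satisfying the degree-3 identity, the trace-sharp formula and
the trace-product formula. -/
structure DegreeThreeAlg (F A : Type*) [Field F] [Ring A] [Algebra F A] where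
  NA : A → F
  Ndir : A → A → F
  TA : A → F
  SA : A → F
  sharp : A → A
  Tbil : A → A → F
  NA_one : NA 1 = 1
  NA_smul : ∀ (c : F) (x : A), NA (c • x) = c ^ 3 * NA x
  Ndir_expand : ∀ (x y : A) (z : F),
    NA (x + z • y) = NA x + z * Ndir x y + z ^ 2 * Ndir y x + z ^ 3 * NA y
  Ndir_add_right : ∀ x y z : A, Ndir x (y + z) = Ndir x y + Ndir x z
  Ndir_smul_right : ∀ (x : A) (c : F) (y : A), Ndir x (c • y) = c * Ndir x y
  TA_def : ∀ x : A, TA x = Ndir 1 x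
  SA_def : ∀ x : A, SA x = Ndir x 1
  sharp_def : ∀ x : A, sharp x = x ^ 2 - TA x • x + SA x • (1 : A)
  Tbil_def : ∀ x y : A,
    Tbil x y = TA x * TA y - (Ndir (1 + y) x - Ndir 1 x - Ndir y x)
  degree3 : ∀ x : A, x ^ 3 - TA x • x ^ 2 + SA x • x - NA x • (1 : A) = 0
  trace_sharp : ∀ x y : A, Tbil (sharp x) y = Ndir x y
  trace_product : ∀ x y : A, Tbil x y = TA (x * y)

variable {F A : Type*} [Field F] [Ring A] [Algebra F A]

/-- Conjugation `x̄ = ½(T_A(x)·1 − x)` in `A`. -/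
noncomputable def bar (D : DegreeThreeAlg F A) (x : A) : A :=
  (2 : F)⁻¹ • (D.TA x • (1 : A) - x)

/-- Linearization of the adjoint in `A`: `x ♯ y = (x+y)^♯ − x^♯ − y^♯`. -/
noncomputable def sharpBil (D : DegreeThreeAlg F A) (x y : A) : A :=
  D.sharp (x + y) - D.sharp x - D.sharp y

/-- `x × y = ½ (x ♯ y)` in `A`. -/
noncomputable def cross (D : DegreeThreeAlg F A) (x y : A) : A :=
  (2 : F)⁻¹ • sharpBil D x y

/-- Multiplication of the generalized first Tits construction `J(A,μ)` on `A ⊕ A ⊕ A`. -/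
noncomputable def Jmul (D : DegreeThreeAlg F A) (μ : Aˣ) (x y : A × A × A) : A × A × A :=
  ((2 : F)⁻¹ • (x.1 * y.1 + y.1 * x.1) + bar D (x.2.1 * y.2.2) + bar D (y.2.1 * x.2.2),
   bar D x.1 * y.2.1 + bar D y.1 * x.2.1 + (↑μ⁻¹ : A) * cross D x.2.2 y.2.2,
   x.2.2 * bar D y.1 + y.2.2 * bar D x.1 + (↑μ : A) * cross D x.2.1 y.2.1)

/-- Adjoint on `J(A,μ)`. -/
noncomputable def Jsharp (D : DegreeThreeAlg F A) (μ : Aˣ) (x : A × A × A) : A × A × A :=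
  (D.sharp x.1 - x.2.1 * x.2.2,
   (↑μ⁻¹ : A) * D.sharp x.2.2 - x.1 * x.2.1,
   (↑μ : A) * D.sharp x.2.1 - x.2.2 * x.1)

/-- Sharp map on `J(A,μ)`: linearization of the adjoint. -/
noncomputable def JsharpBil (D : DegreeThreeAlg F A) (μ : Aˣ) (x y : A × A × A) : A × A × A :=
  Jsharp D μ (x + y) - Jsharp D μ x - Jsharp D μ y

/-- Generalized trace on `J(A,μ)`. -/
def JT (D : DegreeThreeAlg F A) (x : A × A × A) : F := D.TA x.1

/-- Generalized bilinear trace on `J(A,μ)`. -/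
def JTbil (D : DegreeThreeAlg F A) (x y : A × A × A) : F :=
  D.TA (x.1 * y.1) + D.TA (x.2.1 * y.2.2) + D.TA (x.2.2 * y.2.1)

/-- Generalized cubic norm `N : J(A,μ) → A`. -/
noncomputable def JN (D : DegreeThreeAlg F A) (μ : Aˣ) (x : A × A × A) : A :=
  D.NA x.1 • (1 : A) + D.NA x.2.1 • (↑μ : A) + D.NA x.2.2 • (↑μ⁻¹ : A)
    - D.TA (x.1 * x.2.1 * x.2.2) • (1 : A)

/-- The unit `1 = (1,0,0)` of `J(A,μ)`. -/
def Jone : A × A × A := ((1 : A), (0 : A), (0 : A))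

namespace DegreeThreeAlg

variable (D : DegreeThreeAlg F A)

theorem aux_TA_add (x y : A) : D.TA (x + y) = D.TA x + D.TA y := by
  simp only [D.TA_def, D.Ndir_add_right]

theorem aux_TA_smul (c : F) (x : A) : D.TA (c • x) = c * D.TA x := by
  simp only [D.TA_def, D.Ndir_smul_right]

theorem aux_TA_neg (x : A) : D.TA (-x) = - D.TA x := by
  have := D.aux_TA_smul (-1) x
  simpa using this

theorem aux_TA_sub (x y : A) : D.TA (x - y) = D.TA x - D.TA y := by
  rw [sub_eq_add_neg, aux_TA_add, aux_TA_neg, sub_eq_add_neg]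

theorem aux_TA_zero : D.TA 0 = 0 := by
  have := D.aux_TA_smul 0 0
  simpa using this

theorem aux_NA_zero : D.NA 0 = 0 := by
  have := D.NA_smul 0 0
  simpa using this

theorem aux_NA_add (x y : A) : D.NA (x + y) = D.NA x + D.Ndir x y + D.Ndir y x + D.NA y := by
  have := D.Ndir_expand x y 1
  simpa using this

theorem aux_NA_sub (x y : A) : D.NA (x - y) = D.NA x - D.Ndir x y + D.Ndir y x - D.NA y := by
  have := D.Ndir_expand x y (-1)
  simp only [neg_smul, one_smul, ← sub_eq_add_neg] at this
  rw [this]; ring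

theorem aux_TA_one (h2 : (2 : F) ≠ 0) : D.TA 1 = 3 := by
  have h := D.aux_NA_add 1 1
  have h' := D.NA_smul 2 1
  rw [two_smul, h, D.NA_one] at h'
  rw [D.TA_def]
  apply mul_left_cancel₀ h2
  linear_combination h'

theorem aux_theta (x y v : A) :
    D.Ndir (x + y) v - D.Ndir x v - D.Ndir y v = D.Ndir (x + v) y - D.Ndir x y - D.Ndir v y := by
  have h1 := D.aux_NA_add (x + y) v
  have h2 := D.aux_NA_add (x + v) y
  rw [add_right_comm] at h2
  rw [h1, D.aux_NA_add x y, D.aux_NA_add x v, D.Ndir_add_right, D.Ndir_add_right] at h2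
  linear_combination h2

theorem aux_TA_comm (x y : A) : D.TA (x * y) = D.TA (y * x) := by
  rw [← D.trace_product, ← D.trace_product, D.Tbil_def, D.Tbil_def, D.aux_theta 1 y x]
  ring

theorem aux_TA_sharp (x y : A) : D.TA (D.sharp x * y) = D.Ndir x y := by
  rw [← D.trace_product, D.trace_sharp]

theorem aux_two_SA (h2 : (2 : F) ≠ 0) (x : A) : 2 * D.SA x = D.TA x ^ 2 - D.TA (x * x) := by
  have h := D.aux_TA_sharp x 1
  rw [← D.SA_def, mul_one, D.sharp_def, aux_TA_add, aux_TA_sub, aux_TA_smul, aux_TA_smul,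
    D.aux_TA_one h2, pow_two] at h
  linear_combination h

theorem aux_SA_add (h2 : (2 : F) ≠ 0) (x y : A) :
    D.SA (x + y) = D.SA x + D.SA y + D.TA x * D.TA y - D.TA (x * y) := by
  have h := D.aux_two_SA h2 (x + y)
  simp only [add_mul, mul_add, aux_TA_add, D.aux_TA_comm y x] at h
  apply mul_left_cancel₀ h2
  linear_combination h - D.aux_two_SA h2 x - D.aux_two_SA h2 y

theorem aux_SA_neg (h2 : (2 : F) ≠ 0) (x : A) : D.SA (-x) = D.SA x := by
  have h := D.aux_two_SA h2 (-x)
  simp only [neg_mul_neg, aux_TA_neg] at h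
  apply mul_left_cancel₀ h2
  linear_combination h - D.aux_two_SA h2 x

theorem aux_SA_sub (h2 : (2 : F) ≠ 0) (x y : A) :
    D.SA (x - y) = D.SA x + D.SA y - D.TA x * D.TA y + D.TA (x * y) := by
  rw [sub_eq_add_neg, D.aux_SA_add h2, D.aux_SA_neg h2, aux_TA_neg, mul_neg, mul_neg, aux_TA_neg]
  ring

theorem aux_SA_smul (h2 : (2 : F) ≠ 0) (c : F) (x : A) : D.SA (c • x) = c ^ 2 * D.SA x := by
  have h := D.aux_two_SA h2 (c • x)
  simp only [smul_mul_smul_comm, aux_TA_smul] at h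
  apply mul_left_cancel₀ h2
  linear_combination h - c ^ 2 * D.aux_two_SA h2 x

theorem aux_Ndir (x y : A) :
    D.Ndir x y = D.TA (x * x * y) - D.TA x * D.TA (x * y) + D.SA x * D.TA y := by
  rw [← aux_TA_sharp, D.sharp_def, pow_two]
  simp only [add_mul, sub_mul, smul_mul_assoc, one_mul, aux_TA_add, aux_TA_sub, aux_TA_smul]

/-- The degree three identity, linearized once. -/
theorem aux_lin (h2 : (2 : F) ≠ 0) (x y : A) :
    x * x * y + x * y * x + y * x * x - D.TA y • (x * x) - D.TA x • (x * y + y * x)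
      + (D.TA x * D.TA y - D.TA (x * y)) • x + D.SA x • y - D.Ndir x y • (1 : A) = 0 := by
  have h₁ := D.degree3 (x + y)
  have h₂ := D.degree3 (x - y)
  have h₃ := D.degree3 y
  rw [D.aux_NA_add, D.aux_SA_add h2, aux_TA_add] at h₁
  rw [D.aux_NA_sub, D.aux_SA_sub h2, aux_TA_sub] at h₂
  have key : (2 : F) • (x * x * y + x * y * x + y * x * x - D.TA y • (x * x)
      - D.TA x • (x * y + y * x)
      + (D.TA x * D.TA y - D.TA (x * y)) • x + D.SA x • y - D.Ndir x y • (1 : A)) = 0 := by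
    have h := congrArg₂ (· - ·) (congrArg₂ (· - ·) h₁ h₂) (congrArg (fun t => (2 : F) • t) h₃)
    simp only [sub_zero, smul_zero] at h
    rw [← h]
    simp only [pow_succ, pow_zero, one_mul, add_mul, mul_add, sub_mul, mul_sub, ← mul_assoc]
    module
  exact (smul_eq_zero.mp key).resolve_left h2

theorem aux_sharpBil (h2 : (2 : F) ≠ 0) (x y : A) :
    sharpBil D x y = x * y + y * x - D.TA x • y - D.TA y • x
      + (D.TA x * D.TA y - D.TA (x * y)) • (1 : A) := by
  simp only [sharpBil, D.sharp_def, D.aux_SA_add h2, aux_TA_add, pow_two, add_mul, mul_add]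
  module

theorem aux_sharpBil_comm (x y : A) : sharpBil D x y = sharpBil D y x := by
  simp only [sharpBil, add_comm x y]; abel

theorem aux_left (h2 : (2 : F) ≠ 0) (y z : A) :
    sharpBil D y (y * z) = (D.TA z • (1 : A) - z) * D.sharp y := by
  rw [← sub_eq_zero, D.aux_sharpBil h2, ← D.aux_lin h2 y z, D.sharp_def, D.aux_Ndir]
  simp only [pow_two, mul_add, mul_sub, sub_mul, smul_mul_assoc, mul_smul_comm, one_mul, mul_one,
    ← mul_assoc]
  module

theorem aux_right (h2 : (2 : F) ≠ 0) (y z : A) :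
    sharpBil D y (z * y) = D.sharp y * (D.TA z • (1 : A) - z) := by
  have e : D.TA (y * (z * y)) = D.TA (y * y * z) := by
    rw [D.aux_TA_comm, mul_assoc, D.aux_TA_comm, mul_assoc]
  rw [← sub_eq_zero, D.aux_sharpBil h2, ← D.aux_lin h2 y z, D.sharp_def, D.aux_Ndir, e,
    D.aux_TA_comm z y]
  simp only [pow_two, mul_add, mul_sub, add_mul, sub_mul, smul_mul_assoc, mul_smul_comm, one_mul,
    mul_one, ← mul_assoc]
  module

theorem aux_sharp_sharp (h2 : (2 : F) ≠ 0) (x y : A) :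
    sharpBil D y (D.sharp x) = D.TA (x * y) • x - x * y * x := by
  have e : D.TA (D.sharp x) = D.SA x := by
    rw [D.SA_def, ← aux_TA_sharp, mul_one]
  rw [← sub_eq_zero, D.aux_sharpBil_comm, D.aux_sharpBil h2, ← D.aux_lin h2 x y, e,
    D.aux_TA_sharp, D.sharp_def]
  simp only [pow_two, mul_add, mul_sub, add_mul, sub_mul, smul_mul_assoc, mul_smul_comm, one_mul,
    mul_one, ← mul_assoc]
  module

theorem aux_sharpBil_sub (h2 : (2 : F) ≠ 0) (x y z : A) :
    sharpBil D x (y - z) = sharpBil D x y - sharpBil D x z := by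
  simp only [D.aux_sharpBil h2, mul_sub, sub_mul, aux_TA_sub]
  module

theorem aux_sharpBil_smul (h2 : (2 : F) ≠ 0) (c : F) (x y : A) :
    sharpBil D x (c • y) = c • sharpBil D x y := by
  simp only [D.aux_sharpBil h2, mul_smul_comm, smul_mul_assoc, aux_TA_smul]
  module

theorem aux_mul_sharp (x : A) : x * D.sharp x = D.NA x • (1 : A) := by
  rw [← sub_eq_zero, ← D.degree3 x, D.sharp_def]
  simp only [pow_succ, pow_zero, one_mul, mul_add, mul_sub, mul_smul_comm, mul_one, ← mul_assoc]

theorem aux_sharp_mul (x : A) : D.sharp x * x = D.NA x • (1 : A) := by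
  rw [← sub_eq_zero, ← D.degree3 x, D.sharp_def]
  simp only [pow_succ, pow_zero, one_mul, add_mul, sub_mul, smul_mul_assoc, mul_one, ← mul_assoc]

theorem aux_bar_sharp (x : A) : bar D (D.sharp x) = bar D x * x := by
  have e : D.TA (D.sharp x) = D.SA x := by
    rw [D.SA_def, ← aux_TA_sharp, mul_one]
  simp only [bar, e]
  simp only [D.sharp_def, pow_two, smul_mul_assoc, sub_mul, one_mul]
  module

theorem aux_bar_sharp' (x : A) : bar D (D.sharp x) = x * bar D x := by
  rw [aux_bar_sharp]
  simp only [bar, smul_mul_assoc, sub_mul, one_mul, mul_smul_comm, mul_sub, mul_one]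

theorem aux_bar_sub (x y : A) : bar D (x - y) = bar D x - bar D y := by
  simp only [bar, aux_TA_sub]; module

theorem aux_Jmul_comm (μ : Aˣ) (x y : A × A × A) : Jmul D μ x y = Jmul D μ y x := by
  simp only [Jmul, cross, D.aux_sharpBil_comm y.2.2, D.aux_sharpBil_comm y.2.1, Prod.mk.injEq]
  refine ⟨?_, ?_, ?_⟩
  · rw [add_comm (x.1 * y.1)]; abel
  · abel
  · abel

theorem aux_main (h2 : (2 : F) ≠ 0) (μ : Aˣ) (c : F) (hc : c ≠ 0)
    (hμ : (↑μ : A) = c • (1 : A)) (x : A × A × A) :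
    Jmul D μ x (Jsharp D μ x) = (JN D μ x, 0, 0) := by
  have hi : (↑μ⁻¹ : A) = c⁻¹ • (1 : A) := by
    rw [← Units.mul_eq_one_iff_inv_eq, hμ, smul_mul_smul_comm, mul_inv_cancel₀ hc, one_smul,
      one_mul]
  obtain ⟨x0, x1, x2⟩ := x
  simp only [Jmul, Jsharp, JN, hμ, hi, Prod.mk.injEq, smul_mul_assoc, one_mul]
  refine ⟨?_, ?_, ?_⟩
  · have e : D.TA (x1 * (x2 * x0)) = D.TA (x0 * x1 * x2) := by
      rw [← mul_assoc, D.aux_TA_comm, mul_assoc]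
    simp only [mul_sub, sub_mul, mul_smul_comm, smul_mul_assoc, aux_mul_sharp, aux_sharp_mul, bar,
      aux_TA_sub, aux_TA_smul, D.aux_TA_one h2, e, mul_assoc]
    rw [mul_assoc] at e
    match_scalars <;> field_simp <;> ring
  · rw [aux_bar_sub, sub_mul, aux_bar_sharp, cross, D.aux_sharpBil_sub h2, D.aux_sharpBil_smul h2,
      D.aux_left h2, D.aux_sharp_sharp h2]
    simp only [bar, mul_sub, sub_mul, mul_smul_comm, smul_mul_assoc, one_mul, mul_assoc]
    match_scalars <;> field_simp <;> ring
  · rw [aux_bar_sub, mul_sub, aux_bar_sharp', cross, D.aux_sharpBil_sub h2, D.aux_sharpBil_smul h2,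
      D.aux_right h2, D.aux_sharp_sharp h2, D.aux_TA_comm x2 x1]
    simp only [bar, mul_sub, sub_mul, mul_smul_comm, smul_mul_assoc, one_mul, mul_one, mul_assoc]
    match_scalars <;> field_simp <;> ring

end DegreeThreeAlg

/-- `x x^♯ = x^♯ x = N(x)·1` holds for all `x ∈ J(A,μ)` iff `μ ∈ F^×·1`. -/
theorem Jsharp_mul_iff_scalar (F A : Type*) [Field F] [Ring A] [Algebra F A]
    (h2 : (2 : F) ≠ 0) (h3 : (3 : F) ≠ 0) (D : DegreeThreeAlg F A) (μ : Aˣ) :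
    (∀ x : A × A × A,
        Jmul D μ x (Jsharp D μ x) = (JN D μ x, 0, 0) ∧
        Jmul D μ (Jsharp D μ x) x = (JN D μ x, 0, 0)) ↔
      ∃ c : F, c ≠ 0 ∧ (↑μ : A) = c • (1 : A) := by
  constructor
  · intro h
    have h1 := congrArg Prod.fst (h (0, 1, 0)).1
    have hs0 : D.sharp 0 = 0 := by
      have : D.SA 0 = 0 := by simpa using D.aux_SA_smul h2 0 0
      simp [D.sharp_def, this, D.aux_TA_zero]
    have hs1 : D.sharp 1 = 1 := by
      have := D.aux_mul_sharp 1
      simpa [D.NA_one] using this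
    simp only [Jmul, Jsharp, JN, hs0, hs1, D.aux_NA_zero, D.NA_one, D.aux_TA_zero, bar, mul_zero,
      zero_mul, mul_one, one_mul, sub_zero, add_zero, zero_add, zero_smul, one_smul, smul_zero]
      at h1
    have hμ : (↑μ : A) = (D.TA (↑μ : A) / 3) • (1 : A) := by
      have h4 : (3 : F) • (↑μ : A) = D.TA (↑μ : A) • (1 : A) := by
        have h5 : (2 : F) • (↑μ : A) = D.TA (↑μ : A) • (1 : A) - ↑μ := by
          conv_lhs => rw [← h1]
          rw [smul_smul, mul_inv_cancel₀ h2, one_smul]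
        rw [← sub_add_cancel (D.TA (↑μ : A) • (1 : A)) (↑μ : A), ← h5]
        module
      rw [div_eq_inv_mul, mul_smul, ← h4, smul_smul, inv_mul_cancel₀ h3, one_smul]
    refine ⟨_, ?_, hμ⟩
    intro h0
    rw [h0, zero_smul] at hμ
    have h6 : (1 : A) = 0 := by
      rw [← μ.mul_inv, hμ, zero_mul]
    have h7 := D.NA_one
    rw [h6, D.aux_NA_zero] at h7
    exact zero_ne_one h7
  · rintro ⟨c, hc, hμ⟩ x
    refine ⟨D.aux_main h2 μ c hc hμ x, ?_⟩
    rw [D.aux_Jmul_comm]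
    exact D.aux_main h2 μ c hc hμ x
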